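/- arXiv:1302.6872 — 3 statements merged into one kernel-verified Lean document; each statement's English description precedes it below -/
import Mathlib

section
/- Let d ≥ 2 and suppose there exists C > 0 such that ℙ_{p_c}(0 ↔ ∂B_0(n)) ≤ C/n² for all integers n ≥ 1. Then for every η > 0 and every integer ℓ ≥ 1 there exists M > 0 such that for every integer L ≥ 1 there exists p > p_c with ℙ_p(𝒜(x,ℓ,L,M)) ≥ 1 − η for every x ∈ ℤ^d. -/
open MeasureTheory Set

namespace Perc

/-- Vertices of the lattice `ℤ^d`. -/
abbrev V (d : ℕ) : Type := Fin d → ℤ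

/-- Nearest-neighbour adjacency in `ℤ^d`: `‖x - y‖₁ = 1`. -/
def Adjacent {d : ℕ} (x y : V d) : Prop := (∑ i, |x i - y i|) = 1

/-- `e` is an edge of the nearest-neighbour lattice `ℤ^d`. -/
def IsEdge {d : ℕ} (e : Sym2 (V d)) : Prop := ∃ x y : V d, Adjacent x y ∧ e = s(x, y)

/-- The edge set `E(ℤ^d)` of the nearest-neighbour lattice. -/
abbrev Edge (d : ℕ) : Type := {e : Sym2 (V d) // IsEdge e}

/-- A bond percolation configuration: each edge is open (`true`) or closed (`false`). -/
abbrev Config (d : ℕ) : Type := Edge d → Bool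

/-- `x` and `y` are joined by an open edge of `ω`. -/
def OpenAdj {d : ℕ} (ω : Config d) (x y : V d) : Prop :=
  ∃ h : IsEdge s(x, y), ω ⟨s(x, y), h⟩ = true

/-- `x` and `y` lie in the same open cluster of `ω`. -/
def Connected {d : ℕ} (ω : Config d) (x y : V d) : Prop :=
  Relation.ReflTransGen (OpenAdj ω) x y

/-- The open cluster of `ω` containing `x`. -/
def cluster {d : ℕ} (ω : Config d) (x : V d) : Set (V d) := {y | Connected ω x y}

/-- `x` lies in an infinite open cluster of `ω`. -/
def InInfinite {d : ℕ} (ω : Config d) (x : V d) : Prop := (cluster ω x).Infinite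

/-- `𝒞∞(ω)`: the set of vertices lying in infinite open clusters. -/
def Cinf {d : ℕ} (ω : Config d) : Set (V d) := {x | InInfinite ω x}

/-- `ω` has an infinite open cluster. -/
def HasInfCluster {d : ℕ} (ω : Config d) : Prop := ∃ x : V d, InInfinite ω x

/-- The Bernoulli(p) weight of a single edge state (`true ↦ p`, `false ↦ 1 - p`). -/
noncomputable def bernoulliCyl (p : ℝ) (b : Bool) : ENNReal :=
  if b then ENNReal.ofReal p else ENNReal.ofReal (1 - p)

/-- `μ` is the product Bernoulli(`p`) measure on configurations: it is a probability
measure whose finite-dimensional cylinder probabilities are the i.i.d. Bernoulli ones. -/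
def IsBernoulli (d : ℕ) (p : ℝ) (μ : Measure (Config d)) : Prop :=
  IsProbabilityMeasure μ ∧
    ∀ (t : Finset (Edge d)) (f : Edge d → Bool),
      μ {ω | ∀ e ∈ t, ω e = f e} = ∏ e ∈ t, bernoulliCyl p (f e)

/-- The critical probability `p_c` associated with a family `P p` of Bernoulli(`p`)
percolation measures. -/
noncomputable def pcOf (d : ℕ) (P : ℝ → Measure (Config d)) : ℝ :=
  sInf {p | p ∈ Icc (0 : ℝ) 1 ∧ 0 < P p {ω | HasInfCluster ω}}

/-- The monotone coupling randomness: `U` is the law of i.i.d. uniform-`[0,1]` labels on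
the edges (characterized by its finite-dimensional distribution functions). -/
def IsUniform (d : ℕ) (U : Measure (Edge d → ℝ)) : Prop :=
  IsProbabilityMeasure U ∧
    ∀ (t : Finset (Edge d)) (a : Edge d → ℝ),
      U {u | ∀ e ∈ t, u e ≤ a e} = ∏ e ∈ t, ENNReal.ofReal (min (max (a e) 0) 1)

/-- The configuration `ω_p` obtained from uniform labels `u` in the monotone coupling. -/
noncomputable def level {d : ℕ} (p : ℝ) (u : Edge d → ℝ) : Config d :=
  fun e => decide (u e ≤ p)

open Classical in
/-- `ω^S`: the configuration obtained from `ω` by closing every edge with an endpoint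
in `S`. -/
noncomputable def closeOn {d : ℕ} (S : Set (V d)) (ω : Config d) : Config d :=
  fun e => if ∃ x ∈ e.val, x ∈ S then false else ω e

/-- `ω̃_p` built from `ω_p`: keep an edge open iff it is open and its cluster is finite. -/
noncomputable def burn {d : ℕ} (ω : Config d) : Config d := closeOn (Cinf ω) ω

open Classical in
/-- The restriction of `ω` to edges with both endpoints in `R` (other edges closed). -/
noncomputable def restrictTo {d : ℕ} (R : Set (V d)) (ω : Config d) : Config d :=
  fun e => if ∀ x ∈ e.val, x ∈ R then ω e else false

/-- The box `B_x(L) = {y : ‖y - x‖_∞ ≤ L}`. -/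
def box {d : ℕ} (x : V d) (L : ℕ) : Set (V d) := {y | ∀ i, |y i - x i| ≤ (L : ℤ)}

/-- The sphere `∂B_x(L) = {y : ‖y - x‖_∞ = L}`. -/
def sphere {d : ℕ} (x : V d) (L : ℕ) : Set (V d) :=
  {y | (∀ i, |y i - x i| ≤ (L : ℤ)) ∧ ∃ i, |y i - x i| = (L : ℤ)}

/-- The slab `S_ℓ = {x : |x_i| ≤ ℓ for all coordinates i ≥ 3}` (`0`-indexed: `i ≥ 2`). -/
def slab (d : ℕ) (ℓ : ℕ) : Set (V d) := {x | ∀ i : Fin d, 2 ≤ (i : ℕ) → |x i| ≤ (ℓ : ℤ)}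

/-- `x` is connected by an open path to some vertex of `S`. -/
def ConnectedToSet {d : ℕ} (ω : Config d) (x : V d) (S : Set (V d)) : Prop :=
  ∃ y ∈ S, Connected ω x y

/-- The set of vertices `y ∈ S_ℓ ∩ B_x(3L)` with `y ↔ ∂B_y(L)`. -/
def armSet {d : ℕ} (ω : Config d) (x : V d) (ℓ L : ℕ) : Set (V d) :=
  {y | y ∈ slab d ℓ ∩ box x (3 * L) ∧ ConnectedToSet ω y (sphere y L)}

/-- The event `𝒜(x,ℓ,L,M)`: strictly fewer than `M` vertices `y ∈ S_ℓ ∩ B_x(3L)`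
are connected to `∂B_y(L)`. -/
def eventA {d : ℕ} (x : V d) (ℓ L M : ℕ) : Set (Config d) :=
  {ω | (armSet ω x ℓ L).Finite ∧ (armSet ω x ℓ L).ncard < M}

/-- The set `C` has `ℓ∞`-diameter strictly larger than `L`. -/
def DiamGT {d : ℕ} (C : Set (V d)) (L : ℕ) : Prop :=
  ∃ a ∈ C, ∃ b ∈ C, ∃ i, (L : ℤ) < |a i - b i|

/-- The event `ℰ(x,ℓ,L)`: in the restriction of `ω` to `S_ℓ ∩ B_x(3L)` there is an open
crossing from `∂B_x(L)` to `∂B_x(3L)`, and there is exactly one open cluster of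
`ℓ∞`-diameter larger than `L`. -/
def eventE {d : ℕ} (x : V d) (ℓ L : ℕ) : Set (Config d) :=
  {ω |
    (∃ a ∈ sphere x L, ∃ b ∈ sphere x (3 * L),
        Connected (restrictTo (slab d ℓ ∩ box x (3 * L)) ω) a b) ∧
      ∃! C : Set (V d),
        (∃ y : V d, C = cluster (restrictTo (slab d ℓ ∩ box x (3 * L)) ω) y) ∧ DiamGT C L}

/-- The event `ℬ(x,ℓ,L,M)`: `ω^S ∈ ℰ(x,ℓ,L)` for every `S ⊆ B_x(3L)` with `|S| ≤ M`. -/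
def eventB {d : ℕ} (x : V d) (ℓ L M : ℕ) : Set (Config d) :=
  {ω | ∀ S : Set (V d), S ⊆ box x (3 * L) → S.Finite → S.ncard ≤ M →
    closeOn S ω ∈ eventE x ℓ L}

/-- The embedding of `ℤ²` into `ℤ^d` (last `d - 2` coordinates zero). -/
def emb (d : ℕ) (u : ℤ × ℤ) : V d :=
  fun i => if (i : ℕ) = 0 then u.1 else if (i : ℕ) = 1 then u.2 else 0

/-- Nearest-neighbour adjacency in `ℤ²`. -/
def Adjacent₂ (u v : ℤ × ℤ) : Prop := |u.1 - v.1| + |u.2 - v.2| = 1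

/-- `A ⊆ ℤ²` is nearest-neighbour-connected. -/
def ConnSet₂ (A : Set (ℤ × ℤ)) : Prop :=
  ∀ a ∈ A, ∀ b ∈ A,
    Relation.ReflTransGen (fun u v => u ∈ A ∧ v ∈ A ∧ Adjacent₂ u v) a b



def armEv (d L : ℕ) : Set (Config d) := {ω | ConnectedToSet ω 0 (sphere 0 L)}

lemma box_finite {d : ℕ} (x : V d) (L : ℕ) : (box x L).Finite := by
  refine (Set.Finite.pi' (fun i => Set.finite_Icc (x i - L) (x i + L))).subset ?_
  intro y hy i
  have := abs_le.1 (hy i)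
  exact ⟨by linarith [this.1], by linarith [this.2]⟩

lemma edges_finite (d L : ℕ) :
    {e : Edge d | ∀ x ∈ e.val, x ∈ box (0 : V d) L}.Finite := by
  classical
  have h := (box_finite (0 : V d) L)
  refine Set.Finite.subset (Set.Finite.preimage (f := (Subtype.val : Edge d → Sym2 (V d)))
    (Subtype.val_injective.injOn) (h.toFinset.sym2.finite_toSet)) ?_
  intro e he
  simp only [Set.mem_preimage, Finset.mem_coe, Finset.mem_sym2_iff]
  intro a ha
  simpa using he a ha

noncomputable def TT (d L : ℕ) : Finset (Edge d) := (edges_finite d L).toFinset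

lemma adj_of_isEdge {d : ℕ} {x y : V d} (h : IsEdge s(x, y)) (i : Fin d) : |y i - x i| ≤ 1 := by
  obtain ⟨a, b, hab, he⟩ := h
  have h1 : |a i - b i| ≤ 1 := by
    rw [← hab]
    exact Finset.single_le_sum (f := fun i => |a i - b i|) (fun _ _ => abs_nonneg _)
      (Finset.mem_univ i)
  rcases Sym2.eq_iff.1 he with ⟨rfl, rfl⟩ | ⟨rfl, rfl⟩
  · rwa [abs_sub_comm]
  · exact h1

lemma armEv_local {d L : ℕ} {ω ω' : Config d} (h : ∀ e ∈ TT d L, ω e = ω' e)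
    (hω : ω ∈ armEv d L) : ω' ∈ armEv d L := by
  obtain ⟨z, hz, hc⟩ := hω
  have key : ∀ w, Connected ω 0 w → ω' ∈ armEv d L ∨ (w ∈ box (0 : V d) L ∧ Connected ω' 0 w) := by
    intro w hw
    induction hw with
    | refl => right; exact ⟨fun i => by simp, Relation.ReflTransGen.refl⟩
    | @tail b c hb hbc ih =>
      rcases ih with ih | ⟨hbox, hcon⟩
      · exact Or.inl ih
      by_cases hs : b ∈ sphere (0 : V d) L
      · exact Or.inl ⟨b, hs, hcon⟩
      right
      obtain ⟨he, ho⟩ := hbc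
      have hcb : c ∈ box (0 : V d) L := by
        intro i
        have h1 : |b i - (0 : V d) i| < L := by
          refine lt_of_le_of_ne (hbox i) fun hh => hs ⟨hbox, i, hh⟩
        have h2 := adj_of_isEdge he i
        have h3 := abs_add_le (c i - b i) (b i - (0 : V d) i)
        have : c i - b i + (b i - (0 : V d) i) = c i - (0 : V d) i := by ring
        rw [this] at h3
        omega
      refine ⟨hcb, hcon.tail ⟨he, ?_⟩⟩
      rw [← h _ _, ho]
      simp only [TT, Set.Finite.mem_toFinset, Set.mem_ofPred_eq]
      intro x hx
      rcases Sym2.mem_iff.1 hx with rfl | rfl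
      · exact hbox
      · exact hcb
  rcases key z hc with h | h
  · exact h
  · exact ⟨z, hz, h.2⟩

lemma cyl_measurable {d : ℕ} (t : Finset (Edge d)) (f : Edge d → Bool) :
    MeasurableSet {ω : Config d | ∀ e ∈ t, ω e = f e} := by
  have : {ω : Config d | ∀ e ∈ t, ω e = f e} = ⋂ e ∈ t, (fun ω : Config d => ω e) ⁻¹' {f e} := by
    ext; simp
  rw [this]
  exact Finset.measurableSet_biInter _ fun e _ => measurable_pi_apply e (measurableSet_singleton _)

open Classical in
noncomputable def cS {d : ℕ} (s : Finset (Edge d)) : Config d := fun e => decide (e ∈ s)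

open Classical in
noncomputable def good (d L : ℕ) : Finset (Finset (Edge d)) :=
  (TT d L).powerset.filter (fun s => cS s ∈ armEv d L)

lemma armEv_eq (d L : ℕ) :
    armEv d L = ⋃ s ∈ good d L, {ω : Config d | ∀ e ∈ TT d L, ω e = cS s e} := by
  classical
  ext ω
  simp only [Set.mem_iUnion, Set.mem_ofPred_eq, exists_prop, good, Finset.mem_filter,
    Finset.mem_powerset]
  constructor
  · intro h
    have h1 : ∀ e ∈ TT d L, ω e = cS ((TT d L).filter (fun e => ω e = true)) e := by
      intro e he
      simp only [cS, Finset.mem_filter, he, true_and]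
      cases ω e <;> simp
    exact ⟨_, ⟨Finset.filter_subset _ _, armEv_local h1 h⟩, h1⟩
  · rintro ⟨s, ⟨-, hs⟩, h⟩
    exact armEv_local (fun e he => (h e he).symm) hs

lemma armEv_measurable (d L : ℕ) : MeasurableSet (armEv d L) := by
  rw [armEv_eq]
  exact Finset.measurableSet_biUnion _ fun s _ => cyl_measurable _ _

noncomputable def gg (d L : ℕ) (p : ℝ) : ℝ :=
  ∑ s ∈ good d L, ∏ e ∈ TT d L, (if cS s e then p else 1 - p)

lemma gg_cont (d L : ℕ) : Continuous (gg d L) := by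
  unfold gg
  refine continuous_finsetSum _ fun s _ => continuous_finsetProd _ fun e _ => ?_
  split_ifs <;> fun_prop

lemma armEv_measure {d L : ℕ} {p : ℝ} (hp : p ∈ Icc (0 : ℝ) 1) {μ : Measure (Config d)}
    (hμ : IsBernoulli d p μ) : μ (armEv d L) = ENNReal.ofReal (gg d L p) := by
  classical
  have h0 : ∀ b : Bool, (0 : ℝ) ≤ (if b then p else 1 - p) := by
    intro b; split_ifs
    · exact hp.1
    · linarith [hp.2]
  rw [armEv_eq, measure_biUnion_finset]
  · unfold gg
    rw [ENNReal.ofReal_sum_of_nonneg]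
    · refine Finset.sum_congr rfl fun s _ => ?_
      rw [hμ.2, ENNReal.ofReal_prod_of_nonneg]
      · refine Finset.prod_congr rfl fun e _ => ?_
        unfold bernoulliCyl
        split_ifs <;> rfl
      · intro e _; exact h0 _
    · intro s _
      exact Finset.prod_nonneg fun e _ => h0 _
  · intro s hs s' hs' hne
    refine Set.disjoint_left.2 fun ω h1 h2 => hne ?_
    simp only [good, Finset.coe_filter, Finset.mem_powerset, Set.mem_ofPred_eq] at hs hs' h1 h2
    have key : ∀ e ∈ TT d L, (e ∈ s ↔ e ∈ s') := by
      intro e he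
      have := (h1 e he).symm.trans (h2 e he)
      simpa [cS] using this
    ext e
    exact ⟨fun h => (key e (hs.1 h)).1 h, fun h => (key e (hs'.1 h)).2 h⟩
  · intro s _
    exact cyl_measurable _ _

/-! shift -/

lemma isEdge_add {d : ℕ} (y : V d) {e : Sym2 (V d)} (h : IsEdge e) :
    IsEdge (e.map (· + y)) := by
  obtain ⟨a, b, hab, rfl⟩ := h
  refine ⟨a + y, b + y, ?_, by simp⟩
  unfold Adjacent at *
  simpa using hab

def shE {d : ℕ} (y : V d) (e : Edge d) : Edge d := ⟨e.1.map (· + y), isEdge_add y e.2⟩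

lemma shE_inv {d : ℕ} (y : V d) (e : Edge d) : shE y (shE (-y) e) = e := by
  apply Subtype.ext
  simp only [shE, Sym2.map_map]
  have : ((· + y) ∘ (· + -y) : V d → V d) = id := by funext x; simp
  rw [this, Sym2.map_id]; rfl

lemma shE_inv' {d : ℕ} (y : V d) (e : Edge d) : shE (-y) (shE y e) = e := by
  simpa using shE_inv (-y) e

def shC {d : ℕ} (y : V d) (ω : Config d) : Config d := fun e => ω (shE y e)

lemma shC_meas {d : ℕ} (y : V d) : Measurable (shC y) :=
  measurable_pi_lambda _ fun e => measurable_pi_apply (shE y e)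

lemma shC_bern {d : ℕ} {p : ℝ} {μ : Measure (Config d)} (hμ : IsBernoulli d p μ) (y : V d) :
    IsBernoulli d p (μ.map (shC y)) := by
  classical
  have := hμ.1
  refine ⟨Measure.isProbabilityMeasure_map (shC_meas y).aemeasurable, fun t f => ?_⟩
  rw [Measure.map_apply (shC_meas y) (cyl_measurable _ _)]
  have : shC y ⁻¹' {ω | ∀ e ∈ t, ω e = f e} =
      {ω | ∀ e ∈ t.image (shE y), ω e = f (shE (-y) e)} := by
    ext ω
    simp only [Set.mem_preimage, Set.mem_ofPred_eq, shC, Finset.forall_mem_image, shE_inv']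
  rw [this, hμ.2, Finset.prod_image]
  · simp [shE_inv']
  · intro a _ b _ hab
    rw [← shE_inv' y a, hab, shE_inv']

lemma arm_shift {d L : ℕ} {ω : Config d} {y : V d} (h : ConnectedToSet ω y (sphere y L)) :
    ω ∈ shC y ⁻¹' armEv d L := by
  obtain ⟨z, hz, hc⟩ := h
  refine ⟨z - y, ?_, ?_⟩
  · simpa [sphere] using hz
  · have := Relation.ReflTransGen.lift (r := OpenAdj ω) (p := OpenAdj (shC y ω)) (fun w => w - y) ?_ _ _ hc
    · simpa [Connected, Function.onFun] using this
    · rintro a b ⟨he, ho⟩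
      have hE := isEdge_add (-y) he
      simp only [Sym2.map_mk, ← sub_eq_add_neg] at hE
      refine ⟨hE, ?_⟩
      rw [← ho]
      unfold shC
      congr 1
      apply Subtype.ext
      simp [shE]

/-! all-open -/

lemma allopen_arm (d : ℕ) (hd : 2 ≤ d) (n : ℕ) : (fun _ => true) ∈ armEv d n := by
  classical
  have hi : 0 < d := by omega
  refine ⟨Pi.single ⟨0, hi⟩ (n : ℤ), ⟨fun i => ?_, ⟨0, hi⟩, by simp⟩, ?_⟩
  · by_cases h : i = ⟨0, hi⟩
    · subst h; simp
    · simp [h]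
  · induction n with
    | zero => simpa [Connected] using Relation.ReflTransGen.refl
    | succ n ih =>
      refine ih.tail ⟨⟨_, _, ?_, rfl⟩, rfl⟩
      unfold Adjacent
      rw [Finset.sum_eq_single (⟨0, hi⟩ : Fin d)]
      · simp
      · intro b _ hb; simp [hb]
      · simp

lemma one_arm (d : ℕ) (hd : 2 ≤ d) (n : ℕ) {μ : Measure (Config d)} (hμ : IsBernoulli d 1 μ) :
    1 ≤ μ (armEv d n) := by
  have h := hμ.2 (TT d n) (fun _ => true)
  simp only [bernoulliCyl] at h
  rw [Finset.prod_congr rfl (g := fun _ => 1) (by simp), Finset.prod_const_one] at h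
  rw [← h]
  exact measure_mono fun ω hω => armEv_local (fun e he => (hω e he).symm) (allopen_arm d hd n)

lemma pc_mem (d : ℕ) (P : ℝ → Measure (Config d)) : pcOf d P ∈ Icc (0 : ℝ) 1 := by
  unfold pcOf
  refine ⟨Real.sInf_nonneg fun p hp => hp.1.1, ?_⟩
  rcases Set.eq_empty_or_nonempty {p | p ∈ Icc (0 : ℝ) 1 ∧ 0 < P p {ω | HasInfCluster ω}}
    with h | ⟨p, hp⟩
  · rw [h]; simp
  · exact (csInf_le ⟨0, fun q hq => hq.1.1⟩ hp).trans hp.1.2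

/-- The finite window. -/
noncomputable def win {d : ℕ} (x : V d) (ℓ L : ℕ) : Finset (V d) :=
  Fintype.piFinset fun i : Fin d =>
    if (i : ℕ) < 2 then Finset.Icc (x i - 3 * L) (x i + 3 * L) else Finset.Icc (-(ℓ : ℤ)) ℓ

lemma win_card {d : ℕ} (hd : 2 ≤ d) (x : V d) (ℓ L : ℕ) :
    (win x ℓ L).card = (6 * L + 1) ^ 2 * (2 * ℓ + 1) ^ (d - 2) := by
  obtain ⟨k, rfl⟩ : ∃ k, d = k + 2 := ⟨d - 2, by omega⟩
  rw [win, Fintype.card_piFinset, Fin.prod_univ_succ, Fin.prod_univ_succ]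
  have e1 : ∀ a : ℤ, (a + 3 * L + 1 - (a - 3 * L)).toNat = 6 * L + 1 := by intro a; omega
  have e2 : ((ℓ : ℤ) + 1 + ℓ).toNat = 2 * ℓ + 1 := by omega
  simp [e1, e2]
  ring

lemma mem_win {d : ℕ} {x y : V d} {ℓ L : ℕ} (h : y ∈ slab d ℓ ∩ box x (3 * L)) :
    y ∈ win x ℓ L := by
  rw [win, Fintype.mem_piFinset]
  intro i
  have h2 := abs_le.1 (h.2 i)
  push_cast at h2
  split_ifs with hi
  · rw [Finset.mem_Icc]; constructor <;> linarith [h2.1, h2.2]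
  · rw [Finset.mem_Icc]; exact abs_le.1 (h.1 i (by omega))

lemma markov {d : ℕ} {p : ℝ} (hp : p ∈ Icc (0 : ℝ) 1) {μ : Measure (Config d)}
    (hμ : IsBernoulli d p μ) (x : V d) (ℓ L M : ℕ) :
    (M : ENNReal) * μ (eventA x ℓ L M)ᶜ ≤ (win x ℓ L).card * ENNReal.ofReal (gg d L p) := by
  classical
  set F : Config d → ENNReal := fun ω =>
    ∑ y ∈ win x ℓ L, (shC y ⁻¹' armEv d L).indicator 1 ω with hF
  have hm : ∀ y : V d, MeasurableSet (shC y ⁻¹' armEv d L) := fun y =>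
    shC_meas y (armEv_measurable d L)
  have hFm : Measurable F :=
    Finset.measurable_fun_sum _ fun y _ => measurable_one.indicator (hm y)
  have hint : ∫⁻ ω, F ω ∂μ = (win x ℓ L).card * ENNReal.ofReal (gg d L p) := by
    rw [hF, lintegral_finsetSum _ fun y _ => measurable_one.indicator (hm y)]
    rw [Finset.sum_congr rfl fun y _ => ?_, Finset.sum_const, nsmul_eq_mul]
    rw [lintegral_indicator_one (hm y), ← Measure.map_apply (shC_meas y) (armEv_measurable d L),
      armEv_measure hp (shC_bern hμ y)]
  rw [← hint]
  refine le_trans ?_ (mul_meas_ge_le_lintegral hFm (M : ENNReal))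
  gcongr
  intro ω hω
  have hsub : armSet ω x ℓ L ⊆ ((win x ℓ L).filter (fun y => ω ∈ shC y ⁻¹' armEv d L) : Finset (V d)) := by
    intro y hy
    rw [Finset.mem_coe, Finset.mem_filter]
    exact ⟨mem_win hy.1, arm_shift hy.2⟩
  have hfin := (Finset.finite_toSet _).subset hsub
  have hM : M ≤ (armSet ω x ℓ L).ncard := by
    by_contra hlt
    exact hω ⟨hfin, not_le.1 hlt⟩
  have hle := Set.ncard_le_ncard hsub (Finset.finite_toSet _)
  rw [Set.ncard_coe_finset] at hle
  have hFe : F ω = (((win x ℓ L).filter (fun y => ω ∈ shC y ⁻¹' armEv d L)).card : ENNReal) := by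
    simp only [hF, Set.indicator_apply, Pi.one_apply, Finset.sum_boole]
  show (M : ENNReal) ≤ F ω
  rw [hFe]
  exact_mod_cast hM.trans hle

/-- **Lemma 1.** If the one-arm probability at criticality decays like
`C / n²`, then for every `η > 0` and `ℓ ≥ 1` there is `M > 0` such that for every
`L ≥ 1` there is `p > p_c` with `ℙ_p(𝒜(x,ℓ,L,M)) ≥ 1 - η` for every `x`. -/
theorem eventA_likely (d : ℕ) (hd : 2 ≤ d)
    (P : ℝ → Measure (Config d)) (hP : ∀ p ∈ Icc (0 : ℝ) 1, IsBernoulli d p (P p))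
    (C : ℝ) (hC : 0 < C)
    (harm : ∀ n : ℕ, 1 ≤ n →
      P (pcOf d P) {ω | ConnectedToSet ω 0 (sphere 0 n)} ≤ ENNReal.ofReal (C / n ^ 2)) :
    ∀ η : ℝ, 0 < η → ∀ ℓ : ℕ, 1 ≤ ℓ →
      ∃ M : ℕ, 0 < M ∧ ∀ L : ℕ, 1 ≤ L →
        ∃ p : ℝ, pcOf d P < p ∧ p ≤ 1 ∧
          ∀ x : V d, ENNReal.ofReal (1 - η) ≤ P p (eventA x ℓ L M) := by
  intro η hη ℓ hℓ
  have hpc := pc_mem d P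
  have hpc1 : pcOf d P < 1 := by
    refine lt_of_le_of_ne hpc.2 fun h => ?_
    obtain ⟨n, hn⟩ := exists_nat_gt (max C 1)
    have hn1 : (1 : ℝ) < n := (le_max_right _ _).trans_lt hn
    have hnC : C < n := (le_max_left _ _).trans_lt hn
    have h1 := harm n (by exact_mod_cast hn1.le)
    rw [h] at h1
    have h2 := (one_arm d hd n (hP 1 (by simp))).trans h1
    rw [ENNReal.one_le_ofReal, le_div_iff₀ (by positivity)] at h2
    nlinarith
  set D : ℝ := 98 * C * (2 * ℓ + 1) ^ (d - 2) with hD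
  have hD0 : 0 < D := by positivity
  obtain ⟨M, hM⟩ := exists_nat_gt (D / η)
  have hM0 : (0 : ℝ) < M := (by positivity : 0 < D / η).trans hM
  refine ⟨M, by exact_mod_cast hM0, fun L hL => ?_⟩
  have hLr : (1 : ℝ) ≤ L := by exact_mod_cast hL
  have hg : gg d L (pcOf d P) < 2 * C / L ^ 2 := by
    have h1 := harm L hL
    have h2 := armEv_measure (L := L) hpc (hP _ hpc)
    unfold armEv at h2
    rw [h2, ENNReal.ofReal_le_ofReal_iff (by positivity)] at h1
    refine h1.trans_lt ?_
    gcongr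
    linarith
  obtain ⟨p, ⟨hp1, hp2⟩, hp3⟩ : ∃ p, (gg d L p < 2 * C / L ^ 2 ∧ p < 1) ∧ pcOf d P < p := by
    have e1 : ∀ᶠ p in nhds (pcOf d P), gg d L p < 2 * C / L ^ 2 :=
      (gg_cont d L).continuousAt.eventually (gt_mem_nhds hg)
    have e2 : ∀ᶠ p in nhds (pcOf d P), p < 1 := gt_mem_nhds hpc1
    exact (((e1.and e2).filter_mono nhdsWithin_le_nhds).and
      (self_mem_nhdsWithin (s := Ioi (pcOf d P)))).exists
  refine ⟨p, hp3, hp2.le, fun x => ?_⟩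
  have hpm : p ∈ Icc (0 : ℝ) 1 := ⟨hpc.1.trans hp3.le, hp2.le⟩
  have hB := hP p hpm
  have := hB.1
  have hmk := markov hpm hB x ℓ L M
  have hbound : ((win x ℓ L).card : ENNReal) * ENNReal.ofReal (gg d L p) ≤ ENNReal.ofReal D := by
    rw [← ENNReal.ofReal_natCast, ← ENNReal.ofReal_mul (by positivity)]
    apply ENNReal.ofReal_le_ofReal
    rw [win_card hd]
    push_cast
    calc ((6 * L + 1 : ℝ)) ^ 2 * (2 * ℓ + 1) ^ (d - 2) * gg d L p
        ≤ ((6 * L + 1 : ℝ)) ^ 2 * (2 * ℓ + 1) ^ (d - 2) * (2 * C / L ^ 2) :=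
          mul_le_mul_of_nonneg_left hp1.le (by positivity)
      _ ≤ (7 * L) ^ 2 * (2 * ℓ + 1) ^ (d - 2) * (2 * C / L ^ 2) := by
          gcongr
          linarith
      _ = D := by rw [hD]; field_simp; ring
  have hcompl : P p (eventA x ℓ L M)ᶜ ≤ ENNReal.ofReal η := by
    have hMe : (M : ENNReal) ≠ 0 := by
      have : M ≠ 0 := by rintro rfl; simp at hM0
      exact_mod_cast this
    have h3 : (M : ENNReal) * P p (eventA x ℓ L M)ᶜ ≤ M * ENNReal.ofReal η := by
      refine (hmk.trans hbound).trans ?_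
      rw [← ENNReal.ofReal_natCast, ← ENNReal.ofReal_mul (by positivity)]
      apply ENNReal.ofReal_le_ofReal
      rw [div_lt_iff₀ hη] at hM
      exact hM.le
    exact (ENNReal.mul_le_mul_iff_right hMe (ENNReal.natCast_ne_top M)).1 h3
  have huniv : 1 ≤ P p (eventA x ℓ L M) + P p (eventA x ℓ L M)ᶜ := by
    rw [← measure_univ (μ := P p)]
    exact measure_univ_le_add_compl _
  rw [ENNReal.ofReal_sub _ hη.le, ENNReal.ofReal_one]
  exact tsub_le_iff_right.2 (huniv.trans (by gcongr))

end Perc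
end

section
/- Let d ≥ 2, let ε > 0 satisfy p := p_c(d) + ε < 1, and let ℓ, L, M ≥ 1 be integers and x ∈ ℤ^d. Then ℙ_p( complement of ℬ(x,ℓ,L,M) ) ≤ (1 − p)^{−2dM} · ((6L+1)^d + 1)^M · ℙ_p( complement of ℰ(x,ℓ,L) ). -/
open MeasureTheory Set

namespace Perc

theorem indep_aux {d : ℕ} {p : ℝ} {μ : Measure (Config d)} (h : IsBernoulli d p μ)
    (G T : Finset (Edge d)) (hGT : Disjoint G T) (A : Set (Config d))
    (hA : ∀ ω ω' : Config d, (∀ e ∈ G, ω e = ω' e) → ω ∈ A → ω' ∈ A) :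
    μ (A ∩ {ω | ∀ e ∈ T, ω e = false}) = ENNReal.ofReal (1 - p) ^ T.card * μ A := by
  classical
  have hprob := h.1
  let r : Config d → (G → Bool) := fun ω e => ω e
  have hr : Measurable r := by
    refine measurable_pi_lambda _ fun e => measurable_pi_apply _
  have key : ∀ s : Set (Config d), μ s = ∑ g : G → Bool, μ (r ⁻¹' {g} ∩ s) := by
    intro s
    have := sum_measure_preimage_singleton (μ := μ.restrict s) (f := r) Finset.univ
      (fun g _ => hr (measurableSet_singleton g))
    simp only [Finset.coe_univ, Set.preimage_univ, Measure.restrict_apply_univ] at this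
    rw [← this]
    exact Finset.sum_congr rfl fun g _ =>
      Measure.restrict_apply (hr (measurableSet_singleton g))
  rw [key A, key (A ∩ _), Finset.mul_sum]
  refine Finset.sum_congr rfl fun g _ => ?_
  by_cases hg : ∃ ω ∈ A, r ω = g
  · obtain ⟨ω₀, h0, rfl⟩ := hg
    have e1 : r ⁻¹' {r ω₀} ∩ A = {ω | ∀ e ∈ G, ω e = ω₀ e} := by
      ext ω
      constructor
      · rintro ⟨h1, -⟩ e he
        exact congrFun h1 ⟨e, he⟩
      · intro h1
        exact ⟨funext fun e => h1 e e.2, hA ω₀ ω (fun e he => (h1 e he).symm) h0⟩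
    have e2 : r ⁻¹' {r ω₀} ∩ (A ∩ {ω | ∀ e ∈ T, ω e = false}) =
        {ω | ∀ e ∈ G ∪ T, ω e = (if e ∈ T then false else ω₀ e)} := by
      rw [← Set.inter_assoc, e1]
      ext ω
      simp only [Set.mem_inter_iff, Set.mem_setOf_eq, Finset.mem_union]
      constructor
      · rintro ⟨h1, h2⟩ e he
        by_cases hT : e ∈ T
        · simp [hT, h2 e hT]
        · simp [hT, h1 e (he.resolve_right hT)]
      · intro h1
        refine ⟨fun e he => ?_, fun e he => ?_⟩
        · have := h1 e (Or.inl he)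
          rwa [if_neg (Finset.disjoint_left.1 hGT he)] at this
        · have := h1 e (Or.inr he)
          rwa [if_pos he] at this
    rw [e1, e2, h.2, h.2 G ω₀, Finset.prod_union hGT, mul_comm]
    congr 1
    · rw [← Finset.prod_const]
      refine Finset.prod_congr rfl fun e he => ?_
      simp [he, bernoulliCyl]
    · refine Finset.prod_congr rfl fun e he => ?_
      rw [if_neg (Finset.disjoint_left.1 hGT he)]
  · have e1 : r ⁻¹' {g} ∩ A = ∅ := by
      ext ω
      simp only [Set.mem_inter_iff, Set.mem_empty_iff_false, iff_false]
      rintro ⟨h1, h2⟩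
      exact hg ⟨ω, h2, h1⟩
    rw [← Set.inter_assoc, e1]
    simp

theorem nbr_aux {d : ℕ} {x y : V d} (h : Adjacent x y) :
    ∃ i : Fin d, ∃ b : Bool, y = Function.update x i (x i + if b then 1 else -1) := by
  unfold Adjacent at h
  have hne : ∃ i, x i ≠ y i := by
    by_contra hc
    push Not at hc
    simp [hc] at h
  obtain ⟨i, hi⟩ := hne
  have h1 : 1 ≤ |x i - y i| := Int.one_le_abs (sub_ne_zero.2 hi)
  rw [← Finset.add_sum_erase _ _ (Finset.mem_univ i)] at h
  have h2 : 0 ≤ ∑ j ∈ Finset.univ.erase i, |x j - y j| :=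
    Finset.sum_nonneg fun j _ => abs_nonneg _
  have h3 : ∑ j ∈ Finset.univ.erase i, |x j - y j| = 0 := by omega
  have h4 : |x i - y i| = 1 := by omega
  rw [Finset.sum_eq_zero_iff_of_nonneg (fun j _ => abs_nonneg _)] at h3
  have h5 : ∀ j, j ≠ i → y j = x j := fun j hj => by
    have := h3 j (by simp [hj])
    rw [abs_eq_zero] at this
    omega
  rcases (abs_eq (by norm_num)).1 h4 with h6 | h6
  · refine ⟨i, false, funext fun j => ?_⟩
    by_cases hj : j = i
    · subst hj
      simp
      omega
    · simp [hj, h5 j hj]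
  · refine ⟨i, true, funext fun j => ?_⟩
    by_cases hj : j = i
    · subst hj
      simp
      omega
    · simp [hj, h5 j hj]

theorem Adjacent.symm' {d : ℕ} {x y : V d} (h : Adjacent x y) : Adjacent y x := by
  unfold Adjacent at *
  rw [← h]
  exact Finset.sum_congr rfl fun i _ => abs_sub_comm _ _

theorem touch_aux {d : ℕ} (S : Finset (V d)) :
    ∃ T : Finset (Edge d), (∀ e : Edge d, e ∈ T ↔ ∃ y ∈ e.val, y ∈ S) ∧
      T.card ≤ 2 * d * S.card := by
  classical
  let I : Finset (Sym2 (V d)) := (S ×ˢ (Finset.univ : Finset (Fin d × Bool))).image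
    fun q => s(q.1, Function.update q.1 q.2.1 (q.1 q.2.1 + if q.2.2 then 1 else -1))
  have hI : ∀ e : Edge d, (∃ y ∈ e.val, y ∈ S) → e.val ∈ I := by
    rintro ⟨e, he⟩ ⟨y, hy, hS⟩
    obtain ⟨a, b, hab, rfl⟩ := he
    have : ∃ z, Adjacent y z ∧ s(a, b) = s(y, z) := by
      rcases Sym2.mem_iff.1 hy with rfl | rfl
      · exact ⟨b, hab, rfl⟩
      · exact ⟨a, hab.symm', Sym2.eq_swap⟩
    obtain ⟨z, hz, hz'⟩ := this
    obtain ⟨i, c, hc⟩ := nbr_aux hz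
    simp only [hz']
    refine Finset.mem_image.2 ⟨(y, (i, c)), by simp [hS], ?_⟩
    rw [hc]
  refine ⟨(I.subtype IsEdge).filter (fun e => ∃ y ∈ e.val, y ∈ S), fun e => ?_, ?_⟩
  · simp only [Finset.mem_filter, Finset.mem_subtype]
    exact ⟨fun h => h.2, fun h => ⟨hI e h, h⟩⟩
  · refine (Finset.card_filter_le _ _).trans ?_
    rw [Finset.card_subtype]
    refine (Finset.card_filter_le _ _).trans (Finset.card_image_le.trans ?_)
    simp only [Finset.card_product, Finset.card_univ, Fintype.card_prod, Fintype.card_fin,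
      Fintype.card_bool]
    apply le_of_eq
    ring

theorem box_eq {d : ℕ} (x : V d) (n : ℕ) :
    box x n = ((Finset.Icc (fun i => x i - n) (fun i => x i + n) : Finset (V d)) : Set (V d)) := by
  ext y
  simp only [box, Set.mem_setOf_eq, Finset.coe_Icc, Set.mem_Icc, Pi.le_def, abs_le]
  constructor
  · intro h
    exact ⟨fun i => by have := h i; omega, fun i => by have := h i; omega⟩
  · rintro ⟨h1, h2⟩ i
    have := h1 i
    have := h2 i
    constructor <;> omega

theorem box_card {d : ℕ} (x : V d) (n : ℕ) :
    (Finset.Icc (fun i => x i - n) (fun i => x i + n) : Finset (V d)).card = (2 * n + 1) ^ d := by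
  rw [Pi.card_Icc]
  have : ∀ i, (Finset.Icc (x i - n) (x i + n)).card = 2 * n + 1 := fun i => by
    rw [Int.card_Icc]
    omega
  simp [this]

theorem eventE_congr {d : ℕ} {x : V d} {ℓ L : ℕ} {ω ω' : Config d}
    (h : restrictTo (slab d ℓ ∩ box x (3 * L)) ω = restrictTo (slab d ℓ ∩ box x (3 * L)) ω') :
    ω ∈ eventE x ℓ L ↔ ω' ∈ eventE x ℓ L := by
  unfold eventE
  simp only [Set.mem_setOf_eq, h]

theorem single_aux {d : ℕ} {p : ℝ} (hp0 : 0 ≤ p) {μ : Measure (Config d)}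
    (h : IsBernoulli d p μ) (x : V d) (ℓ L M : ℕ) (S : Finset (V d)) (hS : S.card ≤ M) :
    ENNReal.ofReal (1 - p) ^ (2 * d * M) * μ {ω | closeOn (S : Set (V d)) ω ∉ eventE x ℓ L} ≤
      μ (eventE x ℓ L)ᶜ := by
  classical
  obtain ⟨T, hT, hTc⟩ := touch_aux S
  let Bx : Finset (V d) := Finset.Icc (fun i => x i - (3 * L : ℕ)) (fun i => x i + (3 * L : ℕ))
  let G : Finset (Edge d) := (Bx.sym2.subtype IsEdge) \ T
  have hGT : Disjoint G T := Finset.sdiff_disjoint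
  have hind := indep_aux h G T hGT {ω | closeOn (S : Set (V d)) ω ∉ eventE x ℓ L} (by
    intro ω ω' hag hω
    simp only [Set.mem_setOf_eq] at hω ⊢
    rwa [← eventE_congr (ω := closeOn (S : Set (V d)) ω)]
    funext e
    simp only [restrictTo, closeOn, Finset.mem_coe]
    split_ifs with h1 h2
    · rfl
    · apply hag
      refine Finset.mem_sdiff.2 ⟨?_, fun hc => h2 ((hT e).1 hc)⟩
      rw [Finset.mem_subtype, Finset.mem_sym2_iff]
      intro a ha
      have := (h1 a ha).2
      rw [box_eq] at this
      exact this
    · rfl)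
  calc _ ≤ ENNReal.ofReal (1 - p) ^ T.card *
        μ {ω | closeOn (S : Set (V d)) ω ∉ eventE x ℓ L} := by
        gcongr ?_ * _
        refine pow_le_pow_of_le_one zero_le ?_ (hTc.trans (Nat.mul_le_mul_left _ hS))
        exact ENNReal.ofReal_le_one.2 (by linarith)
    _ = _ := hind.symm
    _ ≤ _ := by
        refine measure_mono ?_
        rintro ω ⟨h1, h2⟩
        have : closeOn (S : Set (V d)) ω = ω := by
          funext e
          simp only [closeOn, Finset.mem_coe]
          split_ifs with h3
          · exact (h2 e ((hT e).2 h3)).symm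
          · rfl
        simpa [this] using h1

theorem cover_aux {d : ℕ} (x : V d) (ℓ L M : ℕ) :
    ∃ F : Finset (Finset (V d)), F.card ≤ ((6 * L + 1) ^ d + 1) ^ M ∧
      (∀ S ∈ F, S.card ≤ M) ∧
      (eventB x ℓ L M)ᶜ ⊆ ⋃ S ∈ F, {ω | closeOn (S : Set (V d)) ω ∉ eventE x ℓ L} := by
  classical
  let Bx : Finset (V d) := Finset.Icc (fun i => x i - (3 * L : ℕ)) (fun i => x i + (3 * L : ℕ))
  let Φ : (Fin M → Option (V d)) → Finset (V d) := fun f => (Finset.univ.image f).eraseNone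
  have hΦ : ∀ f, (Φ f).card ≤ M := fun f => by
    have h1 : (Φ f).card ≤ (Finset.univ.image f).card := by
      rw [← Finset.card_map Function.Embedding.some, Finset.map_some_eraseNone]
      exact Finset.card_erase_le
    refine h1.trans (Finset.card_image_le.trans ?_)
    simp
  refine ⟨(Fintype.piFinset fun _ : Fin M => Bx.insertNone).image Φ, ?_, ?_, ?_⟩
  · refine Finset.card_image_le.trans ?_
    rw [Fintype.card_piFinset_const, Finset.card_insertNone, box_card]
    apply le_of_eq
    ring
  · intro S hS
    obtain ⟨f, -, rfl⟩ := Finset.mem_image.1 hS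
    exact hΦ f
  · intro ω hω
    simp only [eventB, Set.mem_compl_iff, Set.mem_setOf_eq] at hω
    push Not at hω
    obtain ⟨S, hSb, hSf, hSc, hSE⟩ := hω
    lift S to Finset (V d) using hSf
    rw [Set.ncard_coe_finset] at hSc
    simp only [Set.mem_iUnion]
    refine ⟨S, ?_, hSE⟩
    refine Finset.mem_image.2 ⟨fun i => S.toList[(i : ℕ)]?, ?_, ?_⟩
    · rw [Fintype.mem_piFinset]
      intro i
      rw [Finset.mem_insertNone]
      intro a ha
      have h1 : a ∈ S := Finset.mem_toList.1 (List.mem_iff_getElem?.2 ⟨i, ha⟩)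
      have h2 := hSb h1
      rw [box_eq] at h2
      exact h2
    · ext a
      simp only [Φ, Finset.mem_eraseNone, Finset.mem_image, Finset.mem_univ, true_and]
      rw [← Finset.mem_toList, List.mem_iff_getElem?]
      constructor
      · rintro ⟨i, hi⟩
        exact ⟨i, hi⟩
      · rintro ⟨i, hi⟩
        have : i < S.toList.length := (List.getElem?_eq_some_iff.1 hi).1
        rw [Finset.length_toList] at this
        exact ⟨⟨i, this.trans_le hSc⟩, hi⟩

theorem final_aux {d : ℕ} {p : ℝ} (hp0 : 0 ≤ p) (hp1 : p < 1) {μ : Measure (Config d)}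
    (h : IsBernoulli d p μ) (x : V d) (ℓ L M : ℕ) :
    μ (eventB x ℓ L M)ᶜ ≤
      ENNReal.ofReal ((1 - p) ^ (-(2 * (d : ℤ) * (M : ℤ))) *
          (((6 * L + 1) ^ d + 1 : ℝ)) ^ M) * μ (eventE x ℓ L)ᶜ := by
  obtain ⟨F, hFc, hFM, hF⟩ := cover_aux (d := d) x ℓ L M
  have hq : 0 < 1 - p := by linarith
  have e1 : ENNReal.ofReal ((1 - p) ^ (-(2 * (d : ℤ) * (M : ℤ))) *
          (((6 * L + 1) ^ d + 1 : ℝ)) ^ M) =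
      (ENNReal.ofReal (1 - p) ^ (2 * d * M))⁻¹ * ((((6 * L + 1) ^ d + 1) ^ M : ℕ) : ENNReal) := by
    rw [ENNReal.ofReal_mul (by positivity), ← ENNReal.ofReal_pow hq.le,
      ← ENNReal.ofReal_inv_of_pos (by positivity), ← ENNReal.ofReal_natCast]
    congr 2
    · rw [zpow_neg]
      congr 1
    · push_cast
      rfl
  have hc0 : ENNReal.ofReal (1 - p) ^ (2 * d * M) ≠ 0 :=
    pow_ne_zero _ (ENNReal.ofReal_pos.2 hq).ne'
  have hct : ENNReal.ofReal (1 - p) ^ (2 * d * M) ≠ ⊤ := ENNReal.pow_ne_top ENNReal.ofReal_ne_top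
  have hs : ∀ S ∈ F, μ {ω | closeOn (S : Set (V d)) ω ∉ eventE x ℓ L} ≤
      (ENNReal.ofReal (1 - p) ^ (2 * d * M))⁻¹ * μ (eventE x ℓ L)ᶜ := fun S hS => by
    have := single_aux hp0 h x ℓ L M S (hFM S hS)
    rw [mul_comm, ← ENNReal.le_div_iff_mul_le (Or.inl hc0) (Or.inl hct)] at this
    rwa [mul_comm, ← div_eq_mul_inv]
  calc _ ≤ μ (⋃ S ∈ F, {ω | closeOn (S : Set (V d)) ω ∉ eventE x ℓ L}) := measure_mono hF
    _ ≤ ∑ S ∈ F, μ {ω | closeOn (S : Set (V d)) ω ∉ eventE x ℓ L} :=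
        measure_biUnion_finset_le _ _
    _ ≤ ∑ S ∈ F, (ENNReal.ofReal (1 - p) ^ (2 * d * M))⁻¹ * μ (eventE x ℓ L)ᶜ :=
        Finset.sum_le_sum hs
    _ = (F.card : ENNReal) * ((ENNReal.ofReal (1 - p) ^ (2 * d * M))⁻¹ * μ (eventE x ℓ L)ᶜ) := by
        rw [Finset.sum_const, nsmul_eq_mul]
    _ ≤ ((((6 * L + 1) ^ d + 1) ^ M : ℕ) : ENNReal) *
        ((ENNReal.ofReal (1 - p) ^ (2 * d * M))⁻¹ * μ (eventE x ℓ L)ᶜ) := by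
        gcongr
    _ = _ := by
        rw [e1]
        ring

/-- The union bound over the at most `((6L+1)^d + 1)^M` sets
`S ⊆ B_x(3L)` with `|S| ≤ M`, combined with the cost `(1-p)^{-2dM}` of closing the edges
touching `S`, bounds `ℙ_p(¬ℬ(x,ℓ,L,M))` in terms of `ℙ_p(¬ℰ(x,ℓ,L))`, at
`p = p_c + ε`. -/
theorem eventB_compl_le (d : ℕ) (hd : 2 ≤ d)
    (P : ℝ → Measure (Config d)) (hP : ∀ p ∈ Icc (0 : ℝ) 1, IsBernoulli d p (P p))
    (ε : ℝ) (hε : 0 < ε) (hpc : pcOf d P + ε < 1)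
    (ℓ L M : ℕ) (hℓ : 1 ≤ ℓ) (hL : 1 ≤ L) (hM : 1 ≤ M) (x : V d) :
    P (pcOf d P + ε) (eventB x ℓ L M)ᶜ ≤
      ENNReal.ofReal ((1 - (pcOf d P + ε)) ^ (-(2 * (d : ℤ) * (M : ℤ))) *
          (((6 * L + 1) ^ d + 1 : ℝ)) ^ M) *
        P (pcOf d P + ε) (eventE x ℓ L)ᶜ := by
  have h0 : 0 ≤ pcOf d P := Real.sInf_nonneg fun p hp => hp.1.1
  exact final_aux (by linarith) hpc (hP _ ⟨by linarith, hpc.le⟩) x ℓ L M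

end Perc
end

section
/- Let d ≥ 2, let ℓ ≥ 8 be an integer, and let ω be a configuration on ℤ^d. For u ∈ ℤ² (identified with {x ∈ ℤ^d : x_i = 0 for all i ≥ 3}), call the box B_{ℓu}(ℓ) good if the restriction of ω to edges with both endpoints in B_{ℓu}(ℓ) contains, for every coordinate direction, an open path joining the two opposite faces of B_{ℓu}(ℓ) in that direction, and moreover any two open clusters of this restriction of ℓ∞-diameter at least ℓ/4 belong to the same open cluster of the restriction. Then deterministically: if G ⊆ ℤ² is an infinite nearest-neighbour-connected set such that B_{ℓu}(ℓ) is good for every u ∈ G, then the restriction of ω to edges with both endpoints in ⋃_{u∈G} B_{ℓu}(ℓ) contains an infinite open cluster. -/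
open MeasureTheory Set

namespace Perc

/-- The set `C` has `ℓ∞`-diameter at least `ℓ/4`. -/
def DiamGEQuarter {d : ℕ} (C : Set (V d)) (ℓ : ℕ) : Prop :=
  ∃ a ∈ C, ∃ b ∈ C, ∃ i, (ℓ : ℤ) ≤ 4 * |a i - b i|

/-- The box `B_{ℓu}(ℓ)` around the rescaled image of `u ∈ ℤ²` in `ℤ^d` is good: its
restriction of `ω` has open crossings between all pairs of opposite faces, and all open
clusters of the restriction of `ℓ∞`-diameter at least `ℓ/4` belong to one open cluster. -/
def GoodBox {d : ℕ} (ω : Config d) (ℓ : ℕ) (u : ℤ × ℤ) : Prop :=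
  (∀ i : Fin d,
      ∃ a ∈ {y ∈ box (fun j => (ℓ : ℤ) * emb d u j) ℓ |
          y i - (ℓ : ℤ) * emb d u i = (ℓ : ℤ)},
        ∃ b ∈ {y ∈ box (fun j => (ℓ : ℤ) * emb d u j) ℓ |
            y i - (ℓ : ℤ) * emb d u i = -(ℓ : ℤ)},
          Connected (restrictTo (box (fun j => (ℓ : ℤ) * emb d u j) ℓ) ω) a b) ∧
    ∀ y z : V d,
      DiamGEQuarter (cluster (restrictTo (box (fun j => (ℓ : ℤ) * emb d u j) ℓ) ω) y) ℓ →
      DiamGEQuarter (cluster (restrictTo (box (fun j => (ℓ : ℤ) * emb d u j) ℓ) ω) z) ℓ →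
      Connected (restrictTo (box (fun j => (ℓ : ℤ) * emb d u j) ℓ) ω) y z

theorem gb_openAdj_symm {d : ℕ} {ω : Config d} {x y : V d} (h : OpenAdj ω x y) :
    OpenAdj ω y x := by
  have key : ∀ e e' : Sym2 (V d), e = e' → (∃ h : IsEdge e, ω ⟨e, h⟩ = true) →
      ∃ h : IsEdge e', ω ⟨e', h⟩ = true := by
    intro e e' he; subst he; exact id
  exact key _ _ Sym2.eq_swap h

theorem gb_conn_symm {d : ℕ} {ω : Config d} {x y : V d} (h : Connected ω x y) :
    Connected ω y x := by
  unfold Connected at *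
  induction h with
  | refl => exact .refl
  | tail _ hb ih => exact .head (gb_openAdj_symm hb) ih

theorem gb_restrict {d : ℕ} {R : Set (V d)} {ω : Config d} {x y : V d} :
    OpenAdj (restrictTo R ω) x y ↔ OpenAdj ω x y ∧ x ∈ R ∧ y ∈ R := by
  unfold OpenAdj restrictTo
  constructor
  · rintro ⟨h, h'⟩
    split_ifs at h' with hc
    exact ⟨⟨h, h'⟩, hc x (by simp), hc y (by simp)⟩
  · rintro ⟨⟨h, h'⟩, hx, hy⟩
    refine ⟨h, ?_⟩
    rw [if_pos]
    · exact h'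
    · intro z hz
      rcases Sym2.mem_iff.1 hz with rfl | rfl <;> assumption

theorem gb_mono {d : ℕ} {R R' : Set (V d)} (hR : R ⊆ R') {ω : Config d} {x y : V d}
    (h : Connected (restrictTo R ω) x y) : Connected (restrictTo R' ω) x y := by
  refine Relation.ReflTransGen.mono ?_ _ _ h
  intro a b hab
  rw [gb_restrict] at *
  exact ⟨hab.1, hR hab.2.1, hR hab.2.2⟩

theorem gb_step {d : ℕ} {ω : Config d} {x y : V d} (h : OpenAdj ω x y) (i : Fin d) :
    |x i - y i| ≤ 1 := by
  obtain ⟨⟨a, b, hab, he⟩, -⟩ := h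
  have h1 : |a i - b i| ≤ 1 := by
    unfold Adjacent at hab
    rw [← hab]
    exact Finset.single_le_sum (f := fun i => |a i - b i|) (fun _ _ => abs_nonneg _)
      (Finset.mem_univ i)
  rcases Sym2.eq_iff.1 he with ⟨rfl, rfl⟩ | ⟨rfl, rfl⟩
  · exact h1
  · rw [abs_sub_comm]; exact h1

theorem gb_last {α : Type*} (r : α → α → Prop) (f : α → ℤ) (c : ℤ)
    (hf : ∀ x y, r x y → f y ≤ f x + 1) {x a : α} (h : Relation.ReflTransGen r x a)
    (ha : c ≤ f a) (hx : f x ≤ c) :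
    ∃ z, f z = c ∧ Relation.ReflTransGen (fun p q => r p q ∧ c ≤ f p ∧ c ≤ f q) z a := by
  have key : (c ≤ f x ∧ Relation.ReflTransGen (fun p q => r p q ∧ c ≤ f p ∧ c ≤ f q) x a) ∨
      ∃ z, f z = c ∧ Relation.ReflTransGen (fun p q => r p q ∧ c ≤ f p ∧ c ≤ f q) z a := by
    clear hx
    induction h using Relation.ReflTransGen.head_induction_on with
    | refl => exact Or.inl ⟨ha, .refl⟩
    | head hxy _ ih =>
      rename_i p q _
      rcases ih with ⟨h1, h2⟩ | h
      · by_cases hp : c ≤ f p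
        · exact Or.inl ⟨hp, .head ⟨hxy, hp, h1⟩ h2⟩
        · have := hf _ _ hxy
          exact Or.inr ⟨q, by omega, h2⟩
      · exact Or.inr h
  rcases key with ⟨h1, h2⟩ | h
  · exact ⟨x, by omega, h2⟩
  · exact h

theorem gb_adj {d : ℕ} (hd : 2 ≤ d) {u v : ℤ × ℤ} (h : Adjacent₂ u v) :
    ∃ (i : Fin d) (s : ℤ), (s = 1 ∨ s = -1) ∧ emb d v i = emb d u i + s ∧
      ∀ j, j ≠ i → emb d v j = emb d u j := by
  unfold Adjacent₂ at h
  have : (u.1 = v.1 ∧ (v.2 = u.2 + 1 ∨ v.2 = u.2 - 1)) ∨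
      (u.2 = v.2 ∧ (v.1 = u.1 + 1 ∨ v.1 = u.1 - 1)) := by
    rcases abs_cases (u.1 - v.1) with h1 | h1 <;> rcases abs_cases (u.2 - v.2) with h2 | h2 <;>
      omega
  rcases this with ⟨h1, h2⟩ | ⟨h1, h2⟩
  · refine ⟨⟨1, by omega⟩, v.2 - u.2, by omega, by simp [emb], ?_⟩
    intro j hj
    have : (j : ℕ) ≠ 1 := fun h => hj (Fin.ext h)
    simp [emb, this, h1]
  · refine ⟨⟨0, by omega⟩, v.1 - u.1, by omega, by simp [emb], ?_⟩
    intro j hj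
    have : (j : ℕ) ≠ 0 := fun h => hj (Fin.ext h)
    simp [emb, this, h1]

theorem gb_overlap {d ℓ : ℕ} (hd : 2 ≤ d) {ω : Config d} {u v : ℤ × ℤ}
    (hu : GoodBox ω ℓ u) (h : Adjacent₂ u v) :
    ∃ z, DiamGEQuarter (cluster (restrictTo (box (fun j => (ℓ : ℤ) * emb d u j) ℓ) ω) z) ℓ ∧
      DiamGEQuarter (cluster (restrictTo (box (fun j => (ℓ : ℤ) * emb d v j) ℓ) ω) z) ℓ := by
  obtain ⟨i, s, hs, hi, hj⟩ := gb_adj hd h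
  obtain ⟨a, ⟨-, ha⟩, b, ⟨-, hb⟩, hab⟩ := hu.1 i
  set m : ℤ := (ℓ : ℤ) * emb d u i with hm
  have hmv : (ℓ : ℤ) * emb d v i = m + s * ℓ := by rw [hi, hm]; ring
  obtain ⟨p, q, hpq, hp, hq⟩ : ∃ p q : V d,
      Connected (restrictTo (box (fun j => (ℓ : ℤ) * emb d u j) ℓ) ω) p q ∧
      s * (p i - m) = -ℓ ∧ s * (q i - m) = ℓ := by
    rcases hs with rfl | rfl
    · exact ⟨b, a, gb_conn_symm hab, by omega, by omega⟩
    · exact ⟨a, b, hab, by omega, by omega⟩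
  obtain ⟨z, hz, hzq⟩ := gb_last _ (fun y : V d => s * (y i - m)) 0 (by
    intro x y hxy
    have := abs_le.1 (gb_step hxy i)
    rcases hs with rfl | rfl <;> beta_reduce <;> omega) hpq (by beta_reduce; omega)
      (by beta_reduce; omega)
  have hsub : ∀ y ∈ box (fun j => (ℓ : ℤ) * emb d u j) ℓ, 0 ≤ s * (y i - m) →
      y ∈ box (fun j => (ℓ : ℤ) * emb d v j) ℓ := by
    intro y hy h0 j
    have hyj := hy j
    by_cases hji : j = i
    · subst hji
      beta_reduce at hyj ⊢
      rw [hmv]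
      rw [← hm] at hyj
      rw [abs_le] at *
      rcases hs with rfl | rfl <;> omega
    · simp only [hj j hji]
      exact hyj
  have hd4 : (ℓ : ℤ) ≤ 4 * |z i - q i| := by
    beta_reduce at hz
    rcases abs_cases (z i - q i) with h1 | h1 <;>
    rcases hs with rfl | rfl <;> omega
  refine ⟨z, ⟨z, .refl, q, ?_, i, hd4⟩, ⟨z, .refl, q, ?_, i, hd4⟩⟩
  · exact Relation.ReflTransGen.mono (fun _ _ h => And.left h) _ _ hzq
  · refine Relation.ReflTransGen.mono ?_ _ _ hzq
    rintro x y ⟨hxy, hx, hy⟩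
    rw [gb_restrict] at *
    exact ⟨hxy.1, hsub _ hxy.2.1 hx, hsub _ hxy.2.2 hy⟩

theorem gb_big {d ℓ : ℕ} (hd : 2 ≤ d) {ω : Config d} {u : ℤ × ℤ} (hu : GoodBox ω ℓ u) :
    ∃ a ∈ box (fun j => (ℓ : ℤ) * emb d u j) ℓ,
      DiamGEQuarter (cluster (restrictTo (box (fun j => (ℓ : ℤ) * emb d u j) ℓ) ω) a) ℓ := by
  obtain ⟨a, ⟨ha', ha⟩, b, ⟨-, hb⟩, hab⟩ := hu.1 ⟨0, by omega⟩
  refine ⟨a, ha', a, .refl, b, hab, ⟨0, by omega⟩, ?_⟩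
  have := le_abs_self (a ⟨0, by omega⟩ - b ⟨0, by omega⟩)
  omega

theorem gb_fin {d ℓ : ℕ} (hd : 2 ≤ d) (hℓ : 8 ≤ ℓ) (y : V d) :
    {u : ℤ × ℤ | y ∈ box (fun j => (ℓ : ℤ) * emb d u j) ℓ}.Finite := by
  have key : ∀ a t : ℤ, |a - ℓ * t| ≤ ℓ → t ∈ Set.Icc (-(|a| + ℓ)) (|a| + ℓ) := by
    intro a t h
    have h1 : |(ℓ : ℤ) * t| ≤ |a| + ℓ := by
      have := abs_sub_abs_le_abs_sub ((ℓ : ℤ) * t) a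
      rw [abs_sub_comm] at this
      omega
    have h2 : |t| ≤ |(ℓ : ℤ) * t| := by
      rw [abs_mul]
      have : (1 : ℤ) ≤ |(ℓ : ℤ)| := by rw [abs_of_nonneg] <;> omega
      exact le_mul_of_one_le_left (abs_nonneg _) this
    exact abs_le.1 (h2.trans h1)
  refine ((Set.finite_Icc (-(|y ⟨0, by omega⟩| + (ℓ : ℤ))) (|y ⟨0, by omega⟩| + (ℓ : ℤ))).prod
    (Set.finite_Icc (-(|y ⟨1, by omega⟩| + (ℓ : ℤ))) (|y ⟨1, by omega⟩| + (ℓ : ℤ)))).subset ?_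
  intro u hu
  have h0 := hu ⟨0, by omega⟩
  have h1 := hu ⟨1, by omega⟩
  simp only [emb, if_true, one_ne_zero, if_false] at h0 h1
  exact ⟨key _ _ h0, key _ _ h1⟩

/-- Deterministically, if `G ⊆ ℤ²` is an infinite
nearest-neighbour-connected set all of whose boxes `B_{ℓu}(ℓ)`, `u ∈ G`, are good, then
the restriction of `ω` to the union of these boxes has an infinite open cluster. -/
theorem good_boxes_percolate (d ℓ : ℕ) (hd : 2 ≤ d) (hℓ : 8 ≤ ℓ) (ω : Config d)
    (G : Set (ℤ × ℤ)) (hGinf : G.Infinite) (hGconn : ConnSet₂ G)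
    (hgood : ∀ u ∈ G, GoodBox ω ℓ u) :
    HasInfCluster
      (restrictTo (⋃ u ∈ G, box (fun j => (ℓ : ℤ) * emb d u j) ℓ) ω) := by
  set R := (⋃ u ∈ G, box (fun j => (ℓ : ℤ) * emb d u j) ℓ) with hR
  have hsub : ∀ u ∈ G, box (fun j => (ℓ : ℤ) * emb d u j) ℓ ⊆ R := fun u hu =>
    Set.subset_biUnion_of_mem (u := fun u => box (fun j => (ℓ : ℤ) * emb d u j) ℓ) hu
  obtain ⟨u0, hu0⟩ := hGinf.nonempty
  obtain ⟨x0, -, hx0⟩ := gb_big hd (hgood u0 hu0)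
  have main : ∀ v ∈ G, ∀ z,
      DiamGEQuarter (cluster (restrictTo (box (fun j => (ℓ : ℤ) * emb d v j) ℓ) ω) z) ℓ →
      Connected (restrictTo R ω) x0 z := by
    intro v hv
    have hp := hGconn u0 hu0 v hv
    clear hv
    induction hp with
    | refl => intro z hz; exact gb_mono (hsub _ hu0) ((hgood _ hu0).2 _ _ hx0 hz)
    | tail _ hbc ih =>
      obtain ⟨hb, hc, hadj⟩ := hbc
      intro z hz
      obtain ⟨w, hw1, hw2⟩ := gb_overlap hd (hgood _ hb) hadj
      exact (ih w hw1).trans (gb_mono (hsub _ hc) ((hgood _ hc).2 _ _ hw2 hz))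
  refine ⟨x0, fun hfin => hGinf ?_⟩
  refine (hfin.biUnion (fun y _ => gb_fin (ℓ := ℓ) hd hℓ y)).subset ?_
  intro v hv
  obtain ⟨a, ha, ha'⟩ := gb_big hd (hgood v hv)
  exact Set.mem_biUnion (main v hv a ha') ha

end Perc
end
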